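/- Let ℋ = ⊗_{x=1}^m 𝒬_x be a tensor product of m finite-dimensional complex Hilbert spaces (qudits), and let H = ∑_{1≤i₁<⋯<i_k≤m} H_{i₁⋯i_k} be a k-local Hamiltonian, where each term H_{i₁⋯i_k} acts as the identity on all qudits outside {i₁,…,i_k} and has vanishing partial trace over each of the qudits i₁,…,i_k. Then for every real q ≥ 2, ‖H‖_q ≤ (q−1)^{k/2} · ‖I‖_q · ‖H‖_(2), where ‖H‖_(2) := √(∑_{1≤i₁<⋯<i_k≤m} ‖H_{i₁⋯i_k}‖_∞²). -/

import Mathlib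

open scoped Kronecker Matrix

/-- The operator norm (largest singular value) of a complex matrix. -/
noncomputable def opNorm {n : Type*} [Fintype n] [DecidableEq n] (A : Matrix n n ℂ) : ℝ :=
  ‖Matrix.toEuclideanCLM (𝕜 := ℂ) A‖

/-- The Schatten `q`-norm `‖A‖_q = (Tr((AᴴA)^{q/2}))^{1/q}`, expressed through the
eigenvalues of `AᴴA` (the squared singular values of `A`). -/
noncomputable def schattenNorm {n : Type*} [Fintype n] [DecidableEq n] (q : ℝ)
    (A : Matrix n n ℂ) : ℝ :=
  (∑ i, ((Matrix.isHermitian_conjTranspose_mul_self A).eigenvalues i) ^ (q / 2)) ^ (1 / q)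

/-- An operator on the qudits `Q x`, `x : Fin m`, is supported on the set `S` if (after
reindexing along the tensor factorization of the configuration space) it has the form
`B ⊗ 1`, i.e. it acts as the identity on all qudits outside `S`. -/
def SupportedOn {m : ℕ} (Q : Fin m → Type*) [∀ x, Fintype (Q x)] [∀ x, DecidableEq (Q x)]
    (S : Finset (Fin m)) (A : Matrix (∀ x, Q x) (∀ x, Q x) ℂ) : Prop :=
  ∃ B : Matrix (∀ x : {y : Fin m // y ∈ S}, Q x) (∀ x : {y : Fin m // y ∈ S}, Q x) ℂ,
    A = Matrix.reindex (Equiv.piEquivPiSubtypeProd (· ∈ S) Q).symm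
          (Equiv.piEquivPiSubtypeProd (· ∈ S) Q).symm
          (B ⊗ₖ (1 : Matrix (∀ x : {y : Fin m // ¬ y ∈ S}, Q x)
                            (∀ x : {y : Fin m // ¬ y ∈ S}, Q x) ℂ))

/-- The partial trace of `A` over the qudit at site `x` vanishes. -/
def TracelessAt {m : ℕ} (Q : Fin m → Type*) [∀ x, Fintype (Q x)] [∀ x, DecidableEq (Q x)]
    (x : Fin m) (A : Matrix (∀ y, Q y) (∀ y, Q y) ℂ) : Prop :=
  ∀ f g : ∀ y, Q y,
    ∑ v : Q x, A (Function.update f x v) (Function.update g x v) = 0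

/-!
Write `N` for the Schatten `q`-norm. The inequality is noncommutative hypercontractivity, and its
one-site form is the uniform smoothness bound `N(A + Y)² ≤ N(A)² + (q - 1) N(Y)²`, valid whenever
`A` acts trivially on a site `x` and `Y` has vanishing partial trace over `x`. Indeed the gradient
`|A|^(q-2) A` of `N(A)^q / q` again acts trivially on `x`, so it is orthogonal to `Y` and there is
no first-order term along `t ↦ A + tY`. The second-order term is controlled by expanding in the
eigenbases of `A + tY` and `A`, where a scalar divided-difference bound applies entrywise, and then
by operator Jensen and Hölder. Peeling off the sites one at a time, splitting the Hamiltonian into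
the terms that do not contain `x` and those that do, yields `N(H)² ≤ ∑ (q - 1)^|S| N(H_S)²`.
-/

section Scalar

variable {q : ℝ}

/-- The duality map `x ↦ |x|^{q-2} x` of the scalar `ℓ^q` norm, i.e. the derivative of
`|x|^q / q`. Applied to a Hermitian matrix through the functional calculus, it is the gradient of
`Tr |A|^q / q`. -/
noncomputable def dualityMap (q x : ℝ) : ℝ := |x| ^ (q - 2) * x

lemma sq_rpow_half (x q : ℝ) : (x ^ 2) ^ (q / 2) = |x| ^ q := by
  rw [← sq_abs, ← Real.rpow_natCast_mul (abs_nonneg x)]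
  congr 1
  push_cast
  ring

lemma convexOn_abs_rpow (hq : 1 ≤ q) : ConvexOn ℝ Set.univ fun x : ℝ => |x| ^ q := by
  refine ⟨convex_univ, fun x _ y _ a b ha hb hab => ?_⟩
  calc |a • x + b • y| ^ q ≤ (a • |x| + b • |y|) ^ q := by
        gcongr
        exact convexOn_univ_norm.2 (Set.mem_univ x) (Set.mem_univ y) ha hb hab
    _ ≤ a • |x| ^ q + b • |y| ^ q := (convexOn_rpow hq).2 (abs_nonneg x) (abs_nonneg y) ha hb hab

lemma continuous_dualityMap (hq : 2 ≤ q) : Continuous (dualityMap q) :=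
  (continuous_abs.rpow_const fun _ => .inr (sub_nonneg.2 hq)).mul continuous_id

lemma hasDerivAt_dualityMap (hq : 2 ≤ q) (x : ℝ) :
    HasDerivAt (dualityMap q) ((q - 1) * |x| ^ (q - 2)) x := by
  have off_zero (y : ℝ) (hy : y ≠ 0) :
      HasDerivAt (dualityMap q) ((q - 1) * |y| ^ (q - 2)) y := by
    have hpow : HasDerivAt (fun z => |z| ^ (q - 2))
        (SignType.sign y * (q - 2) * |y| ^ (q - 2 - 1)) y :=
      (hasDerivAt_abs hy).rpow_const (.inl (abs_ne_zero.2 hy))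
    refine (hpow.mul (hasDerivAt_id' y)).congr_deriv ?_
    rw [Real.rpow_sub_one (abs_ne_zero.2 hy)]
    have hsign : (SignType.sign y : ℝ) * y = |y| := sign_mul_self y
    field_simp
    linear_combination (q - 2) * hsign
  obtain rfl | hx := eq_or_ne x 0
  · refine hasDerivAt_of_hasDerivAt_of_ne off_zero (continuous_dualityMap hq).continuousAt ?_
    exact (continuous_const.mul
      (continuous_abs.rpow_const fun _ => .inr (sub_nonneg.2 hq))).continuousAt
  · exact off_zero x hx

lemma abs_rpow_add_dualityMap_le (hq : 1 < q) (a b : ℝ) :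
    |b| ^ q + q * dualityMap q b * (a - b) ≤ |a| ^ q := by
  have hconv := convexOn_abs_rpow hq.le
  have hderiv : HasDerivAt (fun x : ℝ => |x| ^ q) (q * dualityMap q b) b := by
    simpa only [dualityMap, mul_assoc] using hasDerivAt_abs_rpow b hq
  rcases lt_trichotomy a b with hab | rfl | hab
  · have := hconv.slope_le_of_hasDerivAt (Set.mem_univ a) (Set.mem_univ b) hab hderiv
    rw [slope_def_field, div_le_iff₀ (sub_pos.2 hab)] at this
    linarith
  · simp
  · have := hconv.le_slope_of_hasDerivAt (Set.mem_univ b) (Set.mem_univ a) hab hderiv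
    rw [slope_def_field, le_div_iff₀ (sub_pos.2 hab)] at this
    linarith

lemma midpoint_abs_rpow_le (hq : 2 ≤ q) (a b : ℝ) :
    (|a| ^ (q - 2) + |b| ^ (q - 2)) / 2 ≤ ((|a| ^ q + |b| ^ q) / 2) ^ ((q - 2) / q) := by
  have hq0 : 0 < q := by linarith
  have hpow (x : ℝ) : |x| ^ (q - 2) = (|x| ^ q) ^ ((q - 2) / q) := by
    rw [← Real.rpow_mul (abs_nonneg x), mul_div_cancel₀ _ hq0.ne']
  have hconc := Real.concaveOn_rpow (p := (q - 2) / q) (by bound)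
    ((div_le_one hq0).2 (by linarith))
  have := hconc.2 (Real.rpow_nonneg (abs_nonneg a) q) (Real.rpow_nonneg (abs_nonneg b) q)
    (show (0 : ℝ) ≤ 1 / 2 by norm_num) (show (0 : ℝ) ≤ 1 / 2 by norm_num) (by norm_num)
  simp only [smul_eq_mul, ← hpow, ← mul_add] at this
  linarith [this.trans_eq (congrArg (· ^ ((q - 2) / q)) (one_div_mul_eq_div 2 _))]

lemma abs_add_mul_rpow_add_abs_sub_mul_rpow_le (hq : 1 ≤ q) {s : ℝ} (hs : |s| ≤ 1) (m e : ℝ) :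
    |m + s * e| ^ q + |m - s * e| ^ q ≤ |m + e| ^ q + |m - e| ^ q := by
  obtain ⟨hs₀, hs₁⟩ := abs_le.1 hs
  have hconv (t : ℝ) (ht₀ : 0 ≤ 1 + t) (ht₁ : 0 ≤ 1 - t) := (convexOn_abs_rpow hq).2
    (Set.mem_univ (m + e)) (Set.mem_univ (m - e)) (div_nonneg ht₀ zero_le_two)
    (div_nonneg ht₁ zero_le_two) (by ring)
  have hadd := hconv s (by linarith) (by linarith)
  have hsub := hconv (-s) (by linarith) (by linarith)
  simp only [smul_eq_mul] at hadd hsub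
  rw [show (1 + s) / 2 * (m + e) + (1 - s) / 2 * (m - e) = m + s * e by ring] at hadd
  rw [show (1 + -s) / 2 * (m + e) + (1 - -s) / 2 * (m - e) = m - s * e by ring] at hsub
  linarith

lemma dualityMap_sub_mul_sub_le (hq : 2 ≤ q) (a b : ℝ) :
    (dualityMap q a - dualityMap q b) * (a - b) ≤
      (q - 1) * (a - b) ^ 2 * ((|a| ^ q + |b| ^ q) / 2) ^ ((q - 2) / q) := by
  obtain ⟨m, e, rfl, rfl⟩ : ∃ m e, a = m + e ∧ b = m - e :=
    ⟨(a + b) / 2, (a - b) / 2, by ring, by ring⟩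
  set K := ((|m + e| ^ q + |m - e| ^ q) / 2) ^ ((q - 2) / q)
  let S (s : ℝ) := |m + s * e| ^ (q - 2) + |m - s * e| ^ (q - 2)
  -- Differencing symmetrically about the midpoint makes the mean-value form of the difference
  -- an average of two values of the derivative, to which the power mean inequality applies.
  let D (s : ℝ) := dualityMap q (m + s * e) - dualityMap q (m - s * e)
  have hD (s : ℝ) : HasDerivAt D ((q - 1) * e * S s) s := by
    have hlin : HasDerivAt (fun s => s * e) e s := hasDerivAt_mul_const e
    refine (((hasDerivAt_dualityMap hq _).comp s (hlin.const_add m)).sub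
      ((hasDerivAt_dualityMap hq _).comp s (hlin.const_sub m))).congr_deriv ?_
    ring
  obtain ⟨s, ⟨hs₀, hs₁⟩, hmvt⟩ := exists_hasDerivAt_eq_slope D _ zero_lt_one
    (fun s _ => (hD s).continuousAt.continuousWithinAt) fun s _ => hD s
  have hdiff : dualityMap q (m + e) - dualityMap q (m - e) = (q - 1) * e * S s := by
    simpa [D] using hmvt.symm
  have hS : S s ≤ 2 * K := by
    have hsym := abs_add_mul_rpow_add_abs_sub_mul_rpow_le (q := q) (by linarith)
      (abs_le.2 ⟨by linarith, hs₁.le⟩) m e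
    have hmono : ((|m + s * e| ^ q + |m - s * e| ^ q) / 2) ^ ((q - 2) / q) ≤ K :=
      Real.rpow_le_rpow (by positivity) (by linarith) (by bound)
    linarith [midpoint_abs_rpow_le hq (m + s * e) (m - s * e)]
  have hq1 : 0 ≤ q - 1 := by linarith
  calc (dualityMap q (m + e) - dualityMap q (m - e)) * (m + e - (m - e))
      = (q - 1) * (2 * e ^ 2) * S s := by rw [hdiff]; ring
    _ ≤ (q - 1) * (2 * e ^ 2) * (2 * K) := by gcongr
    _ = (q - 1) * (m + e - (m - e)) ^ 2 * K := by ring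

lemma hasDerivAt_of_subgradient {f g : ℝ → ℝ} (hfg : ∀ s t, f s + g s * (t - s) ≤ f t) {s : ℝ}
    (hg : ContinuousAt g s) : HasDerivAt f (g s) s := by
  rw [hasDerivAt_iff_isLittleO]
  refine Asymptotics.isLittleO_iff.2 fun ε hε => ?_
  filter_upwards [Metric.continuousAt_iff'.1 hg ε hε] with t ht
  have hle : f t - f s - (t - s) * g s ≤ (g t - g s) * (t - s) := by linarith [hfg t s]
  rw [smul_eq_mul, Real.norm_of_nonneg (by linarith [hfg s t]), Real.norm_eq_abs]
  calc f t - f s - (t - s) * g s ≤ |(g t - g s) * (t - s)| := hle.trans (le_abs_self _)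
    _ ≤ ε * |t - s| := by rw [abs_mul]; gcongr; exact (Real.dist_eq _ _ ▸ ht).le

lemma rpow_two_div_le_of_subgradient {f p : ℝ → ℝ} {C : ℝ} (hq : 2 ≤ q) (hC : 0 ≤ C)
    (hsub : ∀ s t, f s + q * p s * (t - s) ≤ f t) (hp : Continuous p)
    (hp0 : p 0 = 0) (hf0 : 0 < f 0)
    (hbound : ∀ t, 0 ≤ t → p t ≤ C * t * ((f t + f 0) / 2) ^ ((q - 2) / q)) :
    f 1 ^ (2 / q) ≤ f 0 ^ (2 / q) + C := by
  have hq0 : 0 < q := by linarith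
  have hmin (t : ℝ) : f 0 ≤ f t := by simpa [hp0] using hsub 0 t
  have hpos (t : ℝ) : 0 < f t := hf0.trans_le (hmin t)
  have hderiv (t : ℝ) : HasDerivAt (fun t => f t ^ (2 / q) - C * t ^ 2)
      (2 * (p t * f t ^ (2 / q - 1) - C * t)) t := by
    have hf : HasDerivAt f (q * p t) t :=
      hasDerivAt_of_subgradient (g := fun t => q * p t) hsub (hp.const_mul q).continuousAt
    refine ((hf.rpow_const (p := 2 / q) (.inl (hpos t).ne')).sub
      (((hasDerivAt_id' t).pow 2).const_mul C)).congr_deriv ?_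
    field_simp
    ring
  have hderiv_nonpos (t : ℝ) (ht : 0 ≤ t) : 2 * (p t * f t ^ (2 / q - 1) - C * t) ≤ 0 := by
    have hpt : p t ≤ C * t * f t ^ ((q - 2) / q) := by
      refine (hbound t ht).trans ?_
      refine mul_le_mul_of_nonneg_left (Real.rpow_le_rpow ?_ ?_ (by bound)) (by positivity) <;>
        linarith [hmin t]
    have hcancel : f t ^ ((q - 2) / q) * f t ^ (2 / q - 1) = 1 := by
      rw [← Real.rpow_add (hpos t), show (q - 2) / q + (2 / q - 1) = 0 by field_simp; ring,
        Real.rpow_zero]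
    have := mul_le_mul_of_nonneg_right hpt (Real.rpow_nonneg (hpos t).le (2 / q - 1))
    rw [mul_assoc (C * t), hcancel] at this
    linarith
  have hanti := antitoneOn_of_deriv_nonpos (convex_Icc (0 : ℝ) 1)
    (fun t _ => (hderiv t).continuousAt.continuousWithinAt)
    (fun t _ => (hderiv t).differentiableAt.differentiableWithinAt) fun t ht =>
      (hderiv t).deriv.trans_le (hderiv_nonpos t (interior_subset ht).1)
  have := hanti (Set.left_mem_Icc.2 zero_le_one) (Set.right_mem_Icc.2 zero_le_one) zero_le_one
  simp only at this
  linarith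

end Scalar

section Compression

open MeasureTheory

variable {ι κ n 𝕜 : Type*} [Fintype ι] [Fintype κ] [Fintype n]

lemma sum_mul_rpow_nonpos {c y : ι → ℝ} (hy : ∀ i, 0 ≤ y i) (hsum : ∑ i, c i = 0)
    (hinv : ∀ t, 0 < t → 0 ≤ ∑ i, c i * (t + y i)⁻¹) {r : ℝ} (hr : r ∈ Set.Ico 0 1) :
    ∑ i, c i * y i ^ r ≤ 0 := by
  obtain rfl | hr0 := hr.1.eq_or_lt
  · simpa using hsum.le
  obtain ⟨ν, hν⟩ := Real.exists_measure_rpow_eq_integral_rpowIntegrand₀₁ ⟨hr0, hr.2⟩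
  calc ∑ i, c i * y i ^ r
      = ∫ t in Set.Ioi 0, ∑ i, c i * Real.rpowIntegrand₀₁ r t (y i) ∂ν := by
        rw [integral_finsetSum _ fun i _ => (hν _ (hy i)).1.const_mul _]
        simp_rw [integral_const_mul, (hν _ (hy _)).2]
    _ ≤ 0 := setIntegral_nonpos measurableSet_Ioi fun t (ht : 0 < t) => ?_
  calc ∑ i, c i * Real.rpowIntegrand₀₁ r t (y i)
      = t ^ r * (t⁻¹ * ∑ i, c i - ∑ i, c i * (t + y i)⁻¹) := by
        simp_rw [Real.rpowIntegrand₀₁, Finset.mul_sum, ← Finset.sum_sub_distrib, Finset.mul_sum]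
        exact Finset.sum_congr rfl fun i _ => by ring
    _ ≤ 0 := by
        rw [hsum, mul_zero, zero_sub]
        exact mul_nonpos_of_nonneg_of_nonpos (by positivity) (neg_nonpos.2 (hinv t ht))

lemma sum_sq_mul_rpow_le {q : ℝ} (hq : 2 ≤ q) (y x : n → ℝ) (hx : ∀ a, 0 ≤ x a) :
    ∑ a, y a ^ 2 * x a ^ ((q - 2) / q) ≤
      (∑ a, |y a| ^ q) ^ (2 / q) * (∑ a, x a) ^ ((q - 2) / q) := by
  have hq0 : 0 < q := by linarith
  obtain rfl | hq2 := hq.eq_or_lt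
  · simp
  have hq2' : q - 2 ≠ 0 := by linarith
  have hconj : (q / 2).HolderConjugate (q / (q - 2)) :=
    Real.holderConjugate_iff.2 ⟨by linarith, by field_simp; ring⟩
  have := Real.inner_le_Lp_mul_Lq_of_nonneg Finset.univ hconj (f := fun a => y a ^ 2)
    (g := fun a => x a ^ ((q - 2) / q)) (fun a _ => sq_nonneg _)
    (fun a _ => Real.rpow_nonneg (hx a) _)
  have hxa (a : n) : (x a ^ ((q - 2) / q)) ^ (q / (q - 2)) = x a := by
    rw [← Real.rpow_mul (hx a), div_mul_div_cancel₀ hq0.ne', div_self hq2', Real.rpow_one]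
  simpa only [one_div_div, sq_rpow_half, hxa] using this

variable [RCLike 𝕜] [DecidableEq ι] [DecidableEq κ] [DecidableEq n]

lemma star_dotProduct_diagonal_mulVec (c : ι → ℝ) (u : ι → 𝕜) :
    star u ⬝ᵥ Matrix.diagonal (fun i => (c i : 𝕜)) *ᵥ u = (∑ i, ‖u i‖ ^ 2 * c i : ℝ) := by
  simp only [dotProduct, Matrix.mulVec_diagonal, Pi.star_apply, RCLike.star_def,
    RCLike.ofReal_sum, RCLike.ofReal_mul, RCLike.ofReal_pow, ← RCLike.conj_mul]
  exact Finset.sum_congr rfl fun i _ => by ring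

lemma sum_norm_mulVec_sq_mul {V : Matrix κ n 𝕜} {μ : κ → ℝ} {x : n → ℝ}
    (h : Vᴴ * Matrix.diagonal (fun k => (μ k : 𝕜)) * V = Matrix.diagonal fun a => (x a : 𝕜))
    (z : n → 𝕜) : ∑ k, ‖(V *ᵥ z) k‖ ^ 2 * μ k = ∑ a, ‖z a‖ ^ 2 * x a := by
  rw [← RCLike.ofReal_inj (K := 𝕜), ← star_dotProduct_diagonal_mulVec,
    ← star_dotProduct_diagonal_mulVec, ← h, Matrix.star_mulVec, ← Matrix.dotProduct_mulVec,
    Matrix.mulVec_mulVec, Matrix.mulVec_mulVec, Matrix.mul_assoc]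

lemma sum_norm_sq_mul_inv_le {V : Matrix κ n 𝕜} (hV : Vᴴ * V = 1) {μ : κ → ℝ} {x : n → ℝ}
    (hμ : ∀ k, 0 < μ k) (hx : ∀ a, 0 < x a)
    (h : Vᴴ * Matrix.diagonal (fun k => (μ k : 𝕜)) * V = Matrix.diagonal fun a => (x a : 𝕜))
    (y : n → 𝕜) : ∑ a, ‖y a‖ ^ 2 * (x a)⁻¹ ≤ ∑ k, ‖(V *ᵥ y) k‖ ^ 2 * (μ k)⁻¹ := by
  let c (a : n) : 𝕜 := y a * ((x a)⁻¹ : ℝ)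
  have hform : ∑ k, ‖(V *ᵥ c) k‖ ^ 2 * μ k = ∑ a, ‖y a‖ ^ 2 * (x a)⁻¹ := by
    rw [sum_norm_mulVec_sq_mul h]
    refine Finset.sum_congr rfl fun a _ => ?_
    have := (hx a).ne'
    rw [norm_mul, RCLike.norm_ofReal, mul_pow, sq_abs]
    field_simp
  have hinner : ∑ k, RCLike.re (star ((V *ᵥ c) k) * (V *ᵥ y) k) = ∑ a, ‖y a‖ ^ 2 * (x a)⁻¹ := by
    have : star (V *ᵥ c) ⬝ᵥ (V *ᵥ y) = star c ⬝ᵥ y := by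
      rw [Matrix.star_mulVec, Matrix.dotProduct_mulVec, Matrix.vecMul_vecMul, hV, Matrix.vecMul_one]
    rw [← map_sum]
    refine (congrArg RCLike.re this).trans ?_
    simp only [dotProduct, c, map_sum, Pi.star_apply, star_mul', RCLike.star_def,
      RCLike.conj_ofReal]
    refine Finset.sum_congr rfl fun a _ => ?_
    rw [mul_right_comm, RCLike.conj_mul, RCLike.re_mul_ofReal]
    norm_cast
  have amgm (k : κ) : 2 * RCLike.re (star ((V *ᵥ c) k) * (V *ᵥ y) k) ≤
      ‖(V *ᵥ y) k‖ ^ 2 * (μ k)⁻¹ + ‖(V *ᵥ c) k‖ ^ 2 * μ k := by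
    have hre : RCLike.re (star ((V *ᵥ c) k) * (V *ᵥ y) k) ≤ ‖(V *ᵥ c) k‖ * ‖(V *ᵥ y) k‖ :=
      (RCLike.re_le_norm _).trans_eq (by rw [norm_mul, norm_star])
    have hsq := mul_nonneg (sq_nonneg (‖(V *ᵥ y) k‖ - ‖(V *ᵥ c) k‖ * μ k)) (inv_pos.2 (hμ k)).le
    have : (‖(V *ᵥ y) k‖ - ‖(V *ᵥ c) k‖ * μ k) ^ 2 * (μ k)⁻¹ = ‖(V *ᵥ y) k‖ ^ 2 * (μ k)⁻¹ +
        ‖(V *ᵥ c) k‖ ^ 2 * μ k - 2 * (‖(V *ᵥ c) k‖ * ‖(V *ᵥ y) k‖) := by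
      have := (hμ k).ne'
      field_simp
      ring
    linarith
  have := Finset.sum_le_sum fun k (_ : k ∈ Finset.univ) => amgm k
  rw [← Finset.mul_sum, hinner, Finset.sum_add_distrib, hform] at this
  linarith

/- The instance `f(u) = u^r` of the operator Jensen inequality `V* f(D) V ≤ f(V* D V)`, reduced to
`f(u) = -(t + u)⁻¹` by the integral representation of `u ^ r`. -/
lemma sum_norm_mulVec_sq_mul_rpow_le {V : Matrix κ n 𝕜} (hV : Vᴴ * V = 1) {μ : κ → ℝ} {x : n → ℝ}
    (hμ : ∀ k, 0 ≤ μ k)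
    (h : Vᴴ * Matrix.diagonal (fun k => (μ k : 𝕜)) * V = Matrix.diagonal fun a => (x a : 𝕜))
    {r : ℝ} (hr : r ∈ Set.Ico 0 1) (y : n → 𝕜) :
    ∑ k, ‖(V *ᵥ y) k‖ ^ 2 * μ k ^ r ≤ ∑ a, ‖y a‖ ^ 2 * x a ^ r := by
  have hx (a : n) : 0 ≤ x a := by
    have := sum_norm_mulVec_sq_mul h (Pi.single a 1)
    rw [Finset.sum_eq_single a (by simp +contextual) (by simp)] at this
    simp only [Pi.single_eq_same, norm_one, one_pow, one_mul] at this
    exact this ▸ Finset.sum_nonneg fun k _ => mul_nonneg (by positivity) (hμ k)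
  have hnorm : ∑ k, ‖(V *ᵥ y) k‖ ^ 2 = ∑ a, ‖y a‖ ^ 2 := by
    simpa using sum_norm_mulVec_sq_mul (μ := 1) (x := 1) (by simp [hV]) y
  have hshift (t : ℝ) : Vᴴ * Matrix.diagonal (fun k => ((t + μ k : ℝ) : 𝕜)) * V =
      Matrix.diagonal fun a => ((t + x a : ℝ) : 𝕜) := by
    have hconst :
        Vᴴ * Matrix.diagonal (fun _ : κ => (t : 𝕜)) * V = Matrix.diagonal fun _ : n => (t : 𝕜) := by
      rw [← Matrix.smul_one_eq_diagonal, ← Matrix.smul_one_eq_diagonal, Matrix.mul_smul,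
        Matrix.mul_one, Matrix.smul_mul, hV]
    simp only [RCLike.ofReal_add, ← Matrix.diagonal_add]
    rw [Matrix.mul_add, Matrix.add_mul, h, hconst]
  have := sum_mul_rpow_nonpos (c := Sum.elim (fun k => ‖(V *ᵥ y) k‖ ^ 2) fun a => -‖y a‖ ^ 2)
    (y := Sum.elim μ x) (Sum.forall.2 ⟨hμ, hx⟩) (by simp [hnorm]) (fun t ht => ?_) hr
  · simpa using this
  · have := sum_norm_sq_mul_inv_le hV (fun k => add_pos_of_pos_of_nonneg ht (hμ k))
      (fun a => add_pos_of_pos_of_nonneg ht (hx a)) (hshift t) y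
    simpa using this

end Compression

section KhatriRao

variable {k l m n p R : Type*}

/-- The Khatri–Rao (column-wise Kronecker) product of two matrices. -/
def khatriRao [Mul R] (S : Matrix l n R) (T : Matrix m n R) : Matrix (l × m) n R :=
  Matrix.of fun i a => S i.1 a * T i.2 a

lemma kronecker_mul_khatriRao [CommSemiring R] [Fintype l] [Fintype m] (D : Matrix k l R)
    (E : Matrix p m R) (S : Matrix l n R) (T : Matrix m n R) :
    (D ⊗ₖ E) * khatriRao S T = khatriRao (D * S) (E * T) := by
  ext i a
  simp only [khatriRao, Matrix.mul_apply, Matrix.of_apply, Matrix.kroneckerMap_apply,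
    Finset.sum_mul_sum, Fintype.sum_prod_type]
  exact Finset.sum_congr rfl fun _ _ => Finset.sum_congr rfl fun _ _ => by ring

lemma conjTranspose_khatriRao_mul_khatriRao [CommSemiring R] [StarRing R] [Fintype l] [Fintype m]
    (S : Matrix l k R) (T : Matrix m k R) (S' : Matrix l n R) (T' : Matrix m n R) :
    (khatriRao S T)ᴴ * khatriRao S' T' = (Sᴴ * S') ⊙ (Tᴴ * T') := by
  ext a b
  simp only [khatriRao, Matrix.mul_apply, Matrix.of_apply, Matrix.conjTranspose_apply,
    Matrix.hadamard_apply, Finset.sum_mul_sum, Fintype.sum_prod_type, star_mul']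
  exact Finset.sum_congr rfl fun _ _ => Finset.sum_congr rfl fun _ _ => by ring

lemma khatriRao_transpose_mulVec [CommSemiring R] [Fintype n] [DecidableEq n] (S : Matrix l n R)
    (T : Matrix n m R) (y : n → R) (i : l) (j : m) :
    (khatriRao S Tᵀ *ᵥ y) (i, j) = (S * Matrix.diagonal y * T) i j := by
  rw [Matrix.mul_apply]
  simp only [khatriRao, Matrix.mulVec, dotProduct, Matrix.of_apply, Matrix.transpose_apply,
    Matrix.mul_diagonal]
  exact Finset.sum_congr rfl fun _ _ => by ring

variable {𝕜 : Type*} [RCLike 𝕜] [Fintype l] [DecidableEq l] [Fintype m] [DecidableEq m]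

lemma conjTranspose_mul_diagonal_mul_apply_self (S : Matrix l n 𝕜) (c : l → ℝ) (a : n) :
    (Sᴴ * Matrix.diagonal (fun i => (c i : 𝕜)) * S) a a = (∑ i, ‖S i a‖ ^ 2 * c i : ℝ) := by
  rw [← star_dotProduct_diagonal_mulVec, Matrix.mul_assoc, Matrix.mul_apply]
  simp only [dotProduct, Matrix.diagonal_mul, Matrix.mulVec_diagonal, Matrix.conjTranspose_apply,
    Pi.star_apply]

variable [DecidableEq n]

lemma conjTranspose_khatriRao_mul_diagonal_mul_khatriRao {S : Matrix l n 𝕜} {T : Matrix m n 𝕜}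
    (hS : Sᴴ * S = 1) (hT : Tᴴ * T = 1) (α : l → ℝ) (β : m → ℝ) :
    (khatriRao S T)ᴴ * Matrix.diagonal (fun i : l × m => ((α i.1 + β i.2 : ℝ) : 𝕜)) *
        khatriRao S T =
      Matrix.diagonal fun a =>
        ((∑ i, ‖S i a‖ ^ 2 * α i + ∑ j, ‖T j a‖ ^ 2 * β j : ℝ) : 𝕜) := by
  have hdiag : Matrix.diagonal (fun i : l × m => ((α i.1 + β i.2 : ℝ) : 𝕜)) =
      Matrix.diagonal (fun i => (α i : 𝕜)) ⊗ₖ (1 : Matrix m m 𝕜) +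
        (1 : Matrix l l 𝕜) ⊗ₖ Matrix.diagonal (fun j => (β j : 𝕜)) := by
    simp [← Matrix.diagonal_one, Matrix.diagonal_kronecker_diagonal]
  rw [hdiag, Matrix.mul_assoc, Matrix.add_mul, kronecker_mul_khatriRao,
    kronecker_mul_khatriRao, Matrix.mul_add, conjTranspose_khatriRao_mul_khatriRao,
    conjTranspose_khatriRao_mul_khatriRao, Matrix.one_mul, Matrix.one_mul, hS, hT,
    Matrix.hadamard_one, Matrix.one_hadamard, Matrix.diagonal_add]
  congr 1
  ext a
  simp only [← Matrix.mul_assoc, conjTranspose_mul_diagonal_mul_apply_self, Matrix.diag_apply,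
    RCLike.ofReal_add]

variable [Fintype n]

lemma sum_norm_sq_row_eq_one {U : Matrix n n 𝕜} (hU : U ∈ Matrix.unitaryGroup n 𝕜) (i : n) :
    ∑ j, ‖U i j‖ ^ 2 = 1 := by
  have := congrFun₂ (Matrix.mem_unitaryGroup_iff.1 hU) i i
  simp only [Matrix.mul_apply, Matrix.one_apply_eq, Matrix.star_apply, RCLike.star_def,
    RCLike.mul_conj] at this
  exact_mod_cast this

lemma sum_norm_sq_mul_diagonal_mul_mul_rpow_le {S T : Matrix n n 𝕜}
    (hS : S ∈ Matrix.unitaryGroup n 𝕜) (hT : T ∈ Matrix.unitaryGroup n 𝕜) {α β : n → ℝ}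
    (hα : ∀ i, 0 ≤ α i) (hβ : ∀ j, 0 ≤ β j) (y : n → ℝ) {q : ℝ} (hq : 2 ≤ q) :
    ∑ i, ∑ j, ‖(S * Matrix.diagonal (fun a => (y a : 𝕜)) * T) i j‖ ^ 2 *
        (α i + β j) ^ ((q - 2) / q) ≤
      (∑ a, |y a| ^ q) ^ (2 / q) * (∑ i, α i + ∑ j, β j) ^ ((q - 2) / q) := by
  have hTt := Matrix.transpose_mem_unitaryGroup_iff.2 hT
  have hS' : Sᴴ * S = 1 := Matrix.mem_unitaryGroup_iff'.1 hS
  have hT' : Tᵀᴴ * Tᵀ = 1 := Matrix.mem_unitaryGroup_iff'.1 hTt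
  let x (a : n) : ℝ := ∑ i, ‖S i a‖ ^ 2 * α i + ∑ j, ‖Tᵀ j a‖ ^ 2 * β j
  have hx (a : n) : 0 ≤ x a :=
    add_nonneg (Finset.sum_nonneg fun i _ => mul_nonneg (by positivity) (hα i))
      (Finset.sum_nonneg fun j _ => mul_nonneg (by positivity) (hβ j))
  have hx_sum : ∑ a, x a = ∑ i, α i + ∑ j, β j := by
    simp only [x, Finset.sum_add_distrib]
    rw [Finset.sum_comm, Finset.sum_comm (f := fun a j => ‖Tᵀ j a‖ ^ 2 * β j)]
    simp only [← Finset.sum_mul, sum_norm_sq_row_eq_one hS, sum_norm_sq_row_eq_one hTt, one_mul]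
  have hisom : (khatriRao S Tᵀ)ᴴ * khatriRao S Tᵀ = 1 := by
    rw [conjTranspose_khatriRao_mul_khatriRao, hS', hT', Matrix.hadamard_one, Matrix.diag_one]
    exact Matrix.diagonal_one
  have hjensen := sum_norm_mulVec_sq_mul_rpow_le hisom (μ := fun i => α i.1 + β i.2)
    (fun i => add_nonneg (hα i.1) (hβ i.2))
    (conjTranspose_khatriRao_mul_diagonal_mul_khatriRao hS' hT' α β) (r := (q - 2) / q)
    ⟨by bound, by rw [div_lt_one] <;> linarith⟩ fun a => (y a : 𝕜)
  simp only [Fintype.sum_prod_type, khatriRao_transpose_mulVec, RCLike.norm_ofReal, sq_abs]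
    at hjensen
  exact hjensen.trans (hx_sum ▸ sum_sq_mul_rpow_le hq y x hx)

end KhatriRao

section Spectral

variable {n 𝕜 : Type*} [Fintype n] [DecidableEq n] [RCLike 𝕜] {A B : Matrix n n 𝕜}

lemma cfc_eq_mul_diagonal_mul_star (hA : A.IsHermitian) (f : ℝ → ℝ) :
    cfc f A = hA.eigenvectorUnitary * Matrix.diagonal (fun i => (f (hA.eigenvalues i) : 𝕜)) *
      star (hA.eigenvectorUnitary : Matrix n n 𝕜) := by
  rw [hA.cfc_eq, Matrix.IsHermitian.cfc, Unitary.conjStarAlgAut_apply]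
  rfl

lemma eq_mul_diagonal_mul_star (hA : A.IsHermitian) :
    A = hA.eigenvectorUnitary * Matrix.diagonal (fun i => (hA.eigenvalues i : 𝕜)) *
      star (hA.eigenvectorUnitary : Matrix n n 𝕜) := by
  simpa only [cfc_id' ℝ A hA.isSelfAdjoint] using cfc_eq_mul_diagonal_mul_star hA fun x => x

/-- The change of basis between the eigenbases of two Hermitian matrices: its `(i, j)` entry is the
inner product of the `i`-th eigenvector of `A` with the `j`-th eigenvector of `B`. -/
noncomputable def eigenbasisOverlap (hA : A.IsHermitian) (hB : B.IsHermitian) :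
    Matrix.unitaryGroup n 𝕜 :=
  star hA.eigenvectorUnitary * hB.eigenvectorUnitary

lemma coe_eigenbasisOverlap (hA : A.IsHermitian) (hB : B.IsHermitian) :
    (eigenbasisOverlap hA hB : Matrix n n 𝕜) =
      star (hA.eigenvectorUnitary : Matrix n n 𝕜) * hB.eigenvectorUnitary :=
  rfl

lemma star_eigenvectorUnitary_mul_mul_eigenvectorUnitary {Y : Matrix n n 𝕜} (hA : A.IsHermitian)
    (hB : B.IsHermitian) (hY : Y.IsHermitian) :
    star (hA.eigenvectorUnitary : Matrix n n 𝕜) * Y * hB.eigenvectorUnitary =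
      eigenbasisOverlap hA hY * Matrix.diagonal (fun i => (hY.eigenvalues i : 𝕜)) *
        eigenbasisOverlap hY hB := by
  conv_lhs => rw [eq_mul_diagonal_mul_star hY]
  simp only [coe_eigenbasisOverlap, Matrix.mul_assoc]

lemma star_eigenvectorUnitary_mul_sub_mul_eigenvectorUnitary_apply (hA : A.IsHermitian)
    (hB : B.IsHermitian) (i j : n) :
    (star (hA.eigenvectorUnitary : Matrix n n 𝕜) * (A - B) * hB.eigenvectorUnitary) i j =
      (hA.eigenvalues i - hB.eigenvalues j) * eigenbasisOverlap hA hB i j := by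
  have hself (M : Matrix n n 𝕜) (hM : M.IsHermitian) : eigenbasisOverlap hM hM = 1 := by
    simp only [eigenbasisOverlap, Unitary.star_mul_self]
  rw [Matrix.mul_sub, Matrix.sub_mul, star_eigenvectorUnitary_mul_mul_eigenvectorUnitary hA hB hA,
    star_eigenvectorUnitary_mul_mul_eigenvectorUnitary hA hB hB, hself, hself]
  simp only [OneMemClass.coe_one, Matrix.one_mul, Matrix.mul_one, Matrix.sub_apply,
    Matrix.diagonal_mul, Matrix.mul_diagonal]
  ring

lemma trace_cfc_mul_cfc (hA : A.IsHermitian) (hB : B.IsHermitian) (f g : ℝ → ℝ) :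
    (cfc f A * cfc g B).trace = (∑ i, ∑ j, ‖(eigenbasisOverlap hA hB : Matrix n n 𝕜) i j‖ ^ 2 *
      (f (hA.eigenvalues i) * g (hB.eigenvalues j)) : ℝ) := by
  set S := (eigenbasisOverlap hA hB : Matrix n n 𝕜) with hS
  have hcycle : (cfc f A * cfc g B).trace =
      (Matrix.diagonal (fun i => (f (hA.eigenvalues i) : 𝕜)) * S *
        (Matrix.diagonal (fun j => (g (hB.eigenvalues j) : 𝕜)) * star S)).trace := by
    rw [cfc_eq_mul_diagonal_mul_star hA, cfc_eq_mul_diagonal_mul_star hB, Matrix.mul_assoc,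
      Matrix.mul_assoc, Matrix.trace_mul_comm, hS, coe_eigenbasisOverlap, star_mul, star_star]
    simp only [Matrix.mul_assoc]
  rw [hcycle, Matrix.trace]
  simp only [Matrix.diag_apply, Matrix.mul_apply (M := _ * S), Matrix.diagonal_mul,
    Matrix.star_apply, RCLike.star_def, RCLike.ofReal_sum]
  refine Finset.sum_congr rfl fun i _ => Finset.sum_congr rfl fun j _ => ?_
  push_cast
  rw [← RCLike.mul_conj]
  ring

lemma norm_eigenbasisOverlap_comm (hA : A.IsHermitian) (hB : B.IsHermitian) (i j : n) :
    ‖(eigenbasisOverlap hB hA : Matrix n n 𝕜) j i‖ =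
      ‖(eigenbasisOverlap hA hB : Matrix n n 𝕜) i j‖ := by
  have : (eigenbasisOverlap hB hA : Matrix n n 𝕜) =
      star (eigenbasisOverlap hA hB : Matrix n n 𝕜) := by
    rw [coe_eigenbasisOverlap, coe_eigenbasisOverlap, star_mul, star_star]
  rw [this, Matrix.star_apply, norm_star]

lemma re_trace_cfc (hA : A.IsHermitian) (f : ℝ → ℝ) :
    RCLike.re (cfc f A).trace = ∑ i, f (hA.eigenvalues i) := by
  rw [cfc_eq_mul_diagonal_mul_star hA, Matrix.trace_mul_cycle,
    Unitary.coe_star_mul_self, Matrix.one_mul, Matrix.trace_diagonal, ← RCLike.ofReal_sum,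
    RCLike.ofReal_re]

lemma re_trace_cfc_eq_sum_sum (hA : A.IsHermitian) (hB : B.IsHermitian) (f : ℝ → ℝ) :
    RCLike.re (cfc f A).trace = ∑ i, ∑ j,
      ‖(eigenbasisOverlap hA hB : Matrix n n 𝕜) i j‖ ^ 2 * f (hA.eigenvalues i) := by
  simp only [← Finset.sum_mul, sum_norm_sq_row_eq_one (eigenbasisOverlap hA hB).2, one_mul,
    re_trace_cfc hA]

lemma re_trace_cfc_mul_sub (hA : A.IsHermitian) (hB : B.IsHermitian) (f : ℝ → ℝ) :
    RCLike.re (cfc f A * (A - B)).trace = ∑ i, ∑ j,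
      ‖(eigenbasisOverlap hA hB : Matrix n n 𝕜) i j‖ ^ 2 *
        (f (hA.eigenvalues i) * (hA.eigenvalues i - hB.eigenvalues j)) := by
  have hfA : cfc f A * A = cfc (fun x => f x * x) A * cfc (fun _ : ℝ => (1 : ℝ)) B := by
    rw [cfc_const_one ℝ B hB.isSelfAdjoint, Matrix.mul_one,
      cfc_mul f _ A (A.finite_real_spectrum.continuousOn f), cfc_id' ℝ A hA.isSelfAdjoint]
  have hfB : cfc f A * B = cfc f A * cfc (fun x : ℝ => x) B := by rw [cfc_id' ℝ B hB.isSelfAdjoint]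
  rw [Matrix.mul_sub, Matrix.trace_sub, hfA, hfB, trace_cfc_mul_cfc hA hB,
    trace_cfc_mul_cfc hA hB, ← RCLike.ofReal_sub, RCLike.ofReal_re]
  simp only [← Finset.sum_sub_distrib]
  exact Finset.sum_congr rfl fun _ _ => Finset.sum_congr rfl fun _ _ => by ring

/- Klein's inequality. -/
lemma re_trace_cfc_add_re_trace_cfc_mul_sub_le {f g : ℝ → ℝ}
    (hfg : ∀ a b, f b + g b * (a - b) ≤ f a) (hA : A.IsHermitian) (hB : B.IsHermitian) :
    RCLike.re (cfc f B).trace + RCLike.re (cfc g B * (A - B)).trace ≤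
      RCLike.re (cfc f A).trace := by
  rw [← neg_sub, Matrix.mul_neg, Matrix.trace_neg, map_neg, re_trace_cfc_mul_sub hB hA,
    re_trace_cfc_eq_sum_sum hB hA, re_trace_cfc_eq_sum_sum hA hB,
    Finset.sum_comm (γ := n) (f := fun i j => _ * f (hA.eigenvalues i)), ← sub_eq_add_neg]
  simp only [← Finset.sum_sub_distrib, ← norm_eigenbasisOverlap_comm hB hA]
  refine Finset.sum_le_sum fun j _ => Finset.sum_le_sum fun i _ => ?_
  rw [← mul_sub]
  gcongr
  linarith [hfg (hA.eigenvalues i) (hB.eigenvalues j)]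

lemma re_trace_cfc_sub_cfc_mul_sub (hA : A.IsHermitian) (hB : B.IsHermitian) (f : ℝ → ℝ) :
    RCLike.re ((cfc f A - cfc f B) * (A - B)).trace = ∑ i, ∑ j,
      ‖(eigenbasisOverlap hA hB : Matrix n n 𝕜) i j‖ ^ 2 *
        ((f (hA.eigenvalues i) - f (hB.eigenvalues j)) *
          (hA.eigenvalues i - hB.eigenvalues j)) := by
  have hB' : RCLike.re (cfc f B * (B - A)).trace = ∑ i, ∑ j,
      ‖(eigenbasisOverlap hA hB : Matrix n n 𝕜) i j‖ ^ 2 *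
        (f (hB.eigenvalues j) * (hB.eigenvalues j - hA.eigenvalues i)) := by
    rw [re_trace_cfc_mul_sub hB hA, Finset.sum_comm]
    simp only [norm_eigenbasisOverlap_comm hA hB]
  have hsplit : (cfc f A - cfc f B) * (A - B) = cfc f A * (A - B) + cfc f B * (B - A) := by
    noncomm_ring
  rw [hsplit, Matrix.trace_add, map_add, re_trace_cfc_mul_sub hA hB, hB']
  simp only [← Finset.sum_add_distrib]
  exact Finset.sum_congr rfl fun _ _ => Finset.sum_congr rfl fun _ _ => by ring

lemma re_trace_cfc_dualityMap_sub_mul_sub_le (hA : A.IsHermitian) (hB : B.IsHermitian) {q : ℝ}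
    (hq : 2 ≤ q) :
    RCLike.re ((cfc (dualityMap q) A - cfc (dualityMap q) B) * (A - B)).trace ≤
      (q - 1) * RCLike.re (cfc (fun x : ℝ => |x| ^ q) (A - B)).trace ^ (2 / q) *
        ((RCLike.re (cfc (fun x : ℝ => |x| ^ q) A).trace +
          RCLike.re (cfc (fun x : ℝ => |x| ^ q) B).trace) / 2) ^ ((q - 2) / q) := by
  have hY := hA.sub hB
  let w (i j : n) := ‖(eigenbasisOverlap hA hB : Matrix n n 𝕜) i j‖ ^ 2
  let α (i : n) := |hA.eigenvalues i| ^ q / 2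
  let β (j : n) := |hB.eigenvalues j| ^ q / 2
  have hw (i j : n) : w i j * (hA.eigenvalues i - hB.eigenvalues j) ^ 2 =
      ‖(eigenbasisOverlap hA hY * Matrix.diagonal (fun a => (hY.eigenvalues a : 𝕜)) *
        eigenbasisOverlap hY hB : Matrix n n 𝕜) i j‖ ^ 2 := by
    rw [← star_eigenvectorUnitary_mul_mul_eigenvectorUnitary hA hB hY,
      star_eigenvectorUnitary_mul_sub_mul_eigenvectorUnitary_apply hA hB, norm_mul, mul_pow,
      mul_comm, ← RCLike.ofReal_sub, RCLike.norm_ofReal, sq_abs]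
  have hq1 : 0 ≤ q - 1 := by linarith
  calc RCLike.re ((cfc (dualityMap q) A - cfc (dualityMap q) B) * (A - B)).trace
      ≤ ∑ i, ∑ j, w i j * ((q - 1) * (hA.eigenvalues i - hB.eigenvalues j) ^ 2 *
          (α i + β j) ^ ((q - 2) / q)) := by
        rw [re_trace_cfc_sub_cfc_mul_sub hA hB]
        refine Finset.sum_le_sum fun i _ => Finset.sum_le_sum fun j _ => ?_
        rw [← add_div]
        exact mul_le_mul_of_nonneg_left (dualityMap_sub_mul_sub_le hq _ _) (sq_nonneg _)
    _ = (q - 1) * ∑ i, ∑ j, ‖(eigenbasisOverlap hA hY *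
          Matrix.diagonal (fun a => (hY.eigenvalues a : 𝕜)) *
            eigenbasisOverlap hY hB : Matrix n n 𝕜) i j‖ ^ 2 * (α i + β j) ^ ((q - 2) / q) := by
        simp only [← hw, Finset.mul_sum]
        exact Finset.sum_congr rfl fun _ _ => Finset.sum_congr rfl fun _ _ => by ring
    _ ≤ _ := by
        rw [mul_assoc (q - 1), re_trace_cfc hY, re_trace_cfc hA, re_trace_cfc hB, add_div,
          Finset.sum_div, Finset.sum_div]
        refine mul_le_mul_of_nonneg_left ?_ hq1
        exact sum_norm_sq_mul_diagonal_mul_mul_rpow_le (eigenbasisOverlap hA hY).2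
          (eigenbasisOverlap hY hB).2 (α := α) (β := β) (fun i => by positivity)
          (fun j => by positivity) hY.eigenvalues hq

end Spectral

section SchattenNorm

open scoped ComplexOrder Matrix.Norms.L2Operator

variable {n : Type*} [Fintype n] [DecidableEq n] {q : ℝ}

lemma eigenvalues_conjTranspose_mul_self_nonneg (A : Matrix n n ℂ) (i : n) :
    0 ≤ (Matrix.isHermitian_conjTranspose_mul_self A).eigenvalues i :=
  (Matrix.posSemidef_conjTranspose_mul_self A).eigenvalues_nonneg i

lemma eigenvalues_conjTranspose_mul_self_le (A : Matrix n n ℂ) (i : n) :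
    (Matrix.isHermitian_conjTranspose_mul_self A).eigenvalues i ≤ opNorm A ^ 2 := by
  have : Nonempty n := ⟨i⟩
  calc _ ≤ ‖Aᴴ * A‖ := (le_abs_self _).trans <| spectrum.norm_le_norm_of_mem
        ((Matrix.isHermitian_conjTranspose_mul_self A).eigenvalues_mem_spectrum_real i)
    _ = opNorm A ^ 2 := by rw [Matrix.l2_opNorm_conjTranspose_mul_self, ← sq]; rfl

lemma schattenNorm_nonneg (q : ℝ) (A : Matrix n n ℂ) : 0 ≤ schattenNorm q A :=
  Real.rpow_nonneg (Finset.sum_nonneg fun i _ =>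
    Real.rpow_nonneg (eigenvalues_conjTranspose_mul_self_nonneg A i) _) _

lemma schattenNorm_rpow (hq : q ≠ 0) (A : Matrix n n ℂ) :
    schattenNorm q A ^ q =
      ∑ i, (Matrix.isHermitian_conjTranspose_mul_self A).eigenvalues i ^ (q / 2) := by
  rw [schattenNorm, one_div, Real.rpow_inv_rpow _ hq]
  exact Finset.sum_nonneg fun i _ =>
    Real.rpow_nonneg (eigenvalues_conjTranspose_mul_self_nonneg A i) _

lemma schattenNorm_rpow_of_isHermitian (hq : q ≠ 0) {A : Matrix n n ℂ} (hA : A.IsHermitian) :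
    schattenNorm q A ^ q = RCLike.re (cfc (fun x : ℝ => |x| ^ q) A).trace := by
  rw [schattenNorm_rpow hq, ← re_trace_cfc _ fun x => x ^ (q / 2), hA.eq, ← sq,
    ← cfc_comp_pow (fun x : ℝ => x ^ (q / 2)) 2 A
      ((A.finite_real_spectrum.image _).continuousOn _) hA.isSelfAdjoint]
  simp only [sq_rpow_half]

lemma schattenNorm_le_schattenNorm_one_mul_opNorm (hq : 0 < q) (A : Matrix n n ℂ) :
    schattenNorm q A ≤ schattenNorm q (1 : Matrix n n ℂ) * opNorm A := by
  have hop : 0 ≤ opNorm A := norm_nonneg _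
  have hone := schattenNorm_nonneg q (1 : Matrix n n ℂ)
  rw [← Real.rpow_le_rpow_iff (schattenNorm_nonneg q A) (mul_nonneg hone hop) hq,
    Real.mul_rpow hone hop, schattenNorm_rpow hq.ne',
    schattenNorm_rpow_of_isHermitian hq.ne' Matrix.isHermitian_one]
  calc ∑ i, (Matrix.isHermitian_conjTranspose_mul_self A).eigenvalues i ^ (q / 2)
      ≤ ∑ _i : n, (opNorm A ^ 2) ^ (q / 2) := by
        gcongr with i
        · exact eigenvalues_conjTranspose_mul_self_nonneg A i
        · exact eigenvalues_conjTranspose_mul_self_le A i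
    _ = _ := by simp [sq_rpow_half, abs_of_nonneg hop]

lemma schattenNorm_smul (hq : 0 < q) (t : ℝ) (A : Matrix n n ℂ) :
    schattenNorm q (t • A) = |t| * schattenNorm q A := by
  have hN := schattenNorm_nonneg q A
  have hsq : (t • A)ᴴ * (t • A) = t ^ 2 • (Aᴴ * A) := by
    rw [Matrix.conjTranspose_smul, star_trivial, Matrix.smul_mul, Matrix.mul_smul, smul_smul, sq]
  have hAA := Matrix.isHermitian_conjTranspose_mul_self A
  rw [← Real.rpow_left_inj (schattenNorm_nonneg q _) (by positivity) hq.ne',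
    Real.mul_rpow (abs_nonneg t) hN, schattenNorm_rpow hq.ne', schattenNorm_rpow hq.ne',
    ← re_trace_cfc _ fun x => x ^ (q / 2), hsq, ← cfc_comp_smul (t ^ 2) _ (Aᴴ * A)
      ((Matrix.finite_real_spectrum.image _).continuousOn _) hAA.isSelfAdjoint, re_trace_cfc hAA,
    Finset.mul_sum]
  refine Finset.sum_congr rfl fun i _ => ?_
  rw [smul_eq_mul, Real.mul_rpow (sq_nonneg t) (eigenvalues_conjTranspose_mul_self_nonneg A i),
    sq_rpow_half]

lemma eq_zero_of_schattenNorm_eq_zero (hq : 0 < q) {A : Matrix n n ℂ} (hA : schattenNorm q A = 0) :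
    A = 0 := by
  have hsum := schattenNorm_rpow hq.ne' A
  rw [hA, Real.zero_rpow hq.ne', eq_comm, Finset.sum_eq_zero_iff_of_nonneg fun i _ =>
    Real.rpow_nonneg (eigenvalues_conjTranspose_mul_self_nonneg A i) _] at hsum
  rw [← Matrix.conjTranspose_mul_self_eq_zero,
    ← (Matrix.isHermitian_conjTranspose_mul_self A).eigenvalues_eq_zero_iff]
  ext i
  exact (Real.rpow_eq_zero (eigenvalues_conjTranspose_mul_self_nonneg A i) (by positivity)).1
    (hsum i (Finset.mem_univ i))

lemma schattenNorm_rpow_add_le (hq : 2 ≤ q) {A B : Matrix n n ℂ} (hA : A.IsHermitian)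
    (hB : B.IsHermitian) :
    schattenNorm q B ^ q + q * RCLike.re (cfc (dualityMap q) B * (A - B)).trace ≤
      schattenNorm q A ^ q := by
  have hq0 : q ≠ 0 := by linarith
  have := re_trace_cfc_add_re_trace_cfc_mul_sub_le
    (abs_rpow_add_dualityMap_le (q := q) (by linarith)) hA hB
  rwa [cfc_const_mul _ _ _ (continuous_dualityMap hq).continuousOn, Matrix.smul_mul,
    Matrix.trace_smul, RCLike.smul_re, ← schattenNorm_rpow_of_isHermitian hq0 hA,
    ← schattenNorm_rpow_of_isHermitian hq0 hB] at this

lemma schattenNorm_sq_eq_rpow (hq : q ≠ 0) (A : Matrix n n ℂ) :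
    schattenNorm q A ^ 2 = (schattenNorm q A ^ q) ^ (2 / q) := by
  rw [← Real.rpow_mul (schattenNorm_nonneg q A), mul_div_cancel₀ _ hq, Real.rpow_two]

lemma continuous_re_trace_cfc_dualityMap_mul (hq : 2 ≤ q) {X Y : Matrix n n ℂ}
    (hX : X.IsHermitian) (hY : Y.IsHermitian) :
    Continuous fun t : ℝ => RCLike.re (cfc (dualityMap q) (X + t • Y) * Y).trace := by
  have hcfc : Continuous fun t : ℝ => cfc (dualityMap q) (X + t • Y) :=
    Continuous.cfc_of_mem_nhdsSet (s := Set.univ) _ (by simp) (by fun_prop)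
      (fun t => (hX.add (hY.smul (IsSelfAdjoint.all t))).isSelfAdjoint)
      (continuous_dualityMap hq).continuousOn
  exact RCLike.continuous_re.comp (hcfc.mul continuous_const).matrix_trace

lemma re_trace_cfc_dualityMap_add_smul_mul_le (hq : 2 ≤ q) {X Y : Matrix n n ℂ}
    (hX : X.IsHermitian) (hY : Y.IsHermitian)
    (horth : RCLike.re (cfc (dualityMap q) X * Y).trace = 0) {t : ℝ} (ht : 0 ≤ t) :
    RCLike.re (cfc (dualityMap q) (X + t • Y) * Y).trace ≤
      (q - 1) * schattenNorm q Y ^ 2 * t *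
        ((schattenNorm q (X + t • Y) ^ q + schattenNorm q X ^ q) / 2) ^ ((q - 2) / q) := by
  have hq0 : 0 < q := by linarith
  obtain rfl | ht := ht.eq_or_lt
  · simp [horth]
  have htY : (t • Y).IsHermitian := hY.smul (IsSelfAdjoint.all t)
  have := re_trace_cfc_dualityMap_sub_mul_sub_le (hX.add htY) hX hq
  rw [add_sub_cancel_left, Matrix.mul_smul, Matrix.trace_smul, RCLike.smul_re, Matrix.sub_mul,
    Matrix.trace_sub, map_sub, horth, sub_zero, ← schattenNorm_rpow_of_isHermitian hq0.ne' hX,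
    ← schattenNorm_rpow_of_isHermitian hq0.ne' (hX.add htY),
    ← schattenNorm_rpow_of_isHermitian hq0.ne' htY,
    ← schattenNorm_sq_eq_rpow hq0.ne', schattenNorm_smul hq0 t Y, abs_of_pos ht] at this
  refine le_of_mul_le_mul_left (this.trans_eq ?_) ht
  ring

theorem schattenNorm_add_sq_le_of_isHermitian (hq : 2 ≤ q) {X Y : Matrix n n ℂ}
    (hX : X.IsHermitian) (hY : Y.IsHermitian)
    (horth : RCLike.re (cfc (dualityMap q) X * Y).trace = 0) :
    schattenNorm q (X + Y) ^ 2 ≤ schattenNorm q X ^ 2 + (q - 1) * schattenNorm q Y ^ 2 := by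
  have hq0 : 0 < q := by linarith
  have hq1 : 1 ≤ q - 1 := by linarith
  obtain hX0 | hX0 := (schattenNorm_nonneg q X).eq_or_lt'
  · rw [hX0, eq_zero_of_schattenNorm_eq_zero hq0 hX0, zero_add]
    nlinarith [sq_nonneg (schattenNorm q Y)]
  have hline (t : ℝ) : (X + t • Y).IsHermitian := hX.add (hY.smul (IsSelfAdjoint.all t))
  have hsub (s t : ℝ) : schattenNorm q (X + s • Y) ^ q +
      q * RCLike.re (cfc (dualityMap q) (X + s • Y) * Y).trace * (t - s) ≤
        schattenNorm q (X + t • Y) ^ q := by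
    have := schattenNorm_rpow_add_le hq (hline t) (hline s)
    rw [add_sub_add_left_eq_sub, ← sub_smul, Matrix.mul_smul, Matrix.trace_smul,
      RCLike.smul_re] at this
    linarith
  have := rpow_two_div_le_of_subgradient (C := (q - 1) * schattenNorm q Y ^ 2)
    (f := fun t => schattenNorm q (X + t • Y) ^ q) hq (by positivity) hsub
    (continuous_re_trace_cfc_dualityMap_mul hq hX hY) (by simpa using horth)
    (by simpa using Real.rpow_pos_of_pos hX0 q) fun t ht => by
      simpa using re_trace_cfc_dualityMap_add_smul_mul_le hq hX hY horth ht
  simpa [← schattenNorm_sq_eq_rpow hq0.ne'] using this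

end SchattenNorm

section Dilation

variable {n : Type*}

/-- The Hermitian dilation of a matrix, through which the inequalities for Hermitian matrices are
transferred to arbitrary ones: its eigenvalues are the singular values of `A` and their
opposites. -/
def hermitianDilation (A : Matrix n n ℂ) : Matrix (n ⊕ n) (n ⊕ n) ℂ :=
  Matrix.fromBlocks 0 A Aᴴ 0

lemma isHermitian_hermitianDilation (A : Matrix n n ℂ) : (hermitianDilation A).IsHermitian :=
  Matrix.IsHermitian.fromBlocks Matrix.isHermitian_zero rfl Matrix.isHermitian_zero

lemma hermitianDilation_add (A B : Matrix n n ℂ) :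
    hermitianDilation (A + B) = hermitianDilation A + hermitianDilation B := by
  simp only [hermitianDilation, Matrix.fromBlocks_add, Matrix.conjTranspose_add, add_zero]

variable [Fintype n] [DecidableEq n] {q : ℝ}

lemma sum_eigenvalues_eq_sum_roots_charpoly {𝕜 : Type*} [RCLike 𝕜] {A : Matrix n n 𝕜}
    (hA : A.IsHermitian) (f : ℝ → ℝ) :
    ∑ i, f (hA.eigenvalues i) = (A.charpoly.roots.map fun z => f (RCLike.re z)).sum := by
  rw [hA.roots_charpoly_eq_eigenvalues, Multiset.map_map, Finset.sum]
  simp only [Function.comp_apply, RCLike.ofReal_re]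

lemma schattenNorm_hermitianDilation_rpow (hq : q ≠ 0) (A : Matrix n n ℂ) :
    schattenNorm q (hermitianDilation A) ^ q = 2 * schattenNorm q A ^ q := by
  rw [schattenNorm_rpow hq, schattenNorm_rpow hq,
    sum_eigenvalues_eq_sum_roots_charpoly _ (· ^ (q / 2)),
    sum_eigenvalues_eq_sum_roots_charpoly _ (· ^ (q / 2)), isHermitian_hermitianDilation,
    hermitianDilation, Matrix.fromBlocks_multiply]
  simp only [Matrix.zero_mul, Matrix.mul_zero, zero_add, add_zero]
  rw [Matrix.charpoly_fromBlocks_zero₁₂, Matrix.charpoly_mul_comm A, Polynomial.roots_mul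
    (mul_ne_zero (Matrix.charpoly_monic _).ne_zero (Matrix.charpoly_monic _).ne_zero),
    Multiset.map_add, Multiset.sum_add, two_mul]

lemma schattenNorm_hermitianDilation_sq (hq : q ≠ 0) (A : Matrix n n ℂ) :
    schattenNorm q (hermitianDilation A) ^ 2 = 2 ^ (2 / q) * schattenNorm q A ^ 2 := by
  rw [schattenNorm_sq_eq_rpow hq, schattenNorm_sq_eq_rpow hq A,
    schattenNorm_hermitianDilation_rpow hq,
    Real.mul_rpow zero_le_two (Real.rpow_nonneg (schattenNorm_nonneg q A) q)]

lemma schattenNorm_add_sq_le (hq : 2 ≤ q) {X Y : Matrix n n ℂ}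
    (horth : RCLike.re
      (cfc (dualityMap q) (hermitianDilation X) * hermitianDilation Y).trace = 0) :
    schattenNorm q (X + Y) ^ 2 ≤ schattenNorm q X ^ 2 + (q - 1) * schattenNorm q Y ^ 2 := by
  have hq0 : q ≠ 0 := by linarith
  have := schattenNorm_add_sq_le_of_isHermitian hq (isHermitian_hermitianDilation X)
    (isHermitian_hermitianDilation Y) horth
  rw [← hermitianDilation_add, schattenNorm_hermitianDilation_sq hq0,
    schattenNorm_hermitianDilation_sq hq0, schattenNorm_hermitianDilation_sq hq0,
    mul_left_comm, ← mul_add] at this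
  exact le_of_mul_le_mul_left this (by positivity)

lemma commute_toBlocks_cfc_hermitianDilation {A G : Matrix n n ℂ} (hA : Commute A G)
    (hA' : Commute Aᴴ G) (f : ℝ → ℝ) :
    Commute (cfc f (hermitianDilation A)).toBlocks₁₂ G ∧
      Commute (cfc f (hermitianDilation A)).toBlocks₂₁ G := by
  have hdil : Commute (hermitianDilation A) (Matrix.fromBlocks G 0 0 G) := by
    simp only [commute_iff_eq, hermitianDilation, Matrix.fromBlocks_multiply, Matrix.zero_mul,
      Matrix.mul_zero, zero_add, add_zero, hA.eq, hA'.eq]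
  have hcfc := (hdil.cfc_real f).eq
  rw [← Matrix.fromBlocks_toBlocks (cfc f (hermitianDilation A)), Matrix.fromBlocks_multiply,
    Matrix.fromBlocks_multiply, Matrix.fromBlocks_inj] at hcfc
  simp only [Matrix.zero_mul, Matrix.mul_zero, zero_add, add_zero] at hcfc
  exact ⟨hcfc.2.1, hcfc.2.2.1⟩

lemma toBlocks_cfc_hermitianDilation_mem_centralizer {C : Set (Matrix n n ℂ)} {A : Matrix n n ℂ}
    (hA : A ∈ StarSubalgebra.centralizer ℂ C) (f : ℝ → ℝ) :
    (cfc f (hermitianDilation A)).toBlocks₁₂ ∈ StarSubalgebra.centralizer ℂ C ∧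
      (cfc f (hermitianDilation A)).toBlocks₂₁ ∈ StarSubalgebra.centralizer ℂ C := by
  have hA' := star_mem hA
  simp only [StarSubalgebra.mem_centralizer_iff] at hA hA' ⊢
  have hcomm (G : Matrix n n ℂ) (hG : G * A = A * G) (hG' : G * Aᴴ = Aᴴ * G) :=
    commute_toBlocks_cfc_hermitianDilation hG.symm hG'.symm f
  constructor <;> intro G hG
  · exact ⟨(hcomm G (hA G hG).1 (hA' G hG).1).1.eq.symm,
      (hcomm (star G) (hA G hG).2 (hA' G hG).2).1.eq.symm⟩
  · exact ⟨(hcomm G (hA G hG).1 (hA' G hG).1).2.eq.symm,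
      (hcomm (star G) (hA G hG).2 (hA' G hG).2).2.eq.symm⟩

theorem schattenNorm_add_sq_le_of_mem_centralizer (hq : 2 ≤ q) {C : Set (Matrix n n ℂ)}
    {A Y : Matrix n n ℂ} (hA : A ∈ StarSubalgebra.centralizer ℂ C)
    (hY : ∀ Z ∈ StarSubalgebra.centralizer ℂ C, (Z * Y).trace = 0) :
    schattenNorm q (A + Y) ^ 2 ≤ schattenNorm q A ^ 2 + (q - 1) * schattenNorm q Y ^ 2 := by
  refine schattenNorm_add_sq_le hq ?_
  obtain ⟨h₁₂, h₂₁⟩ := toBlocks_cfc_hermitianDilation_mem_centralizer hA (dualityMap q)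
  set Z := cfc (dualityMap q) (hermitianDilation A)
  have hY' : (Z.toBlocks₁₂ * Yᴴ).trace = 0 := by
    rw [← star_eq_zero, ← Matrix.trace_conjTranspose, Matrix.conjTranspose_mul,
      Matrix.conjTranspose_conjTranspose, Matrix.trace_mul_comm]
    exact hY _ (star_mem h₁₂)
  have hblocks : (Z * hermitianDilation Y).trace =
      (Z.toBlocks₁₂ * Yᴴ).trace + (Z.toBlocks₂₁ * Y).trace := by
    rw [← Matrix.fromBlocks_toBlocks Z, hermitianDilation, Matrix.fromBlocks_multiply]
    simp only [Matrix.trace, Matrix.diag_apply, Fintype.sum_sum_type, Matrix.fromBlocks_apply₁₁,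
      Matrix.fromBlocks_apply₂₂, Matrix.mul_zero, zero_add, add_zero,
      Matrix.toBlocks_fromBlocks₁₂, Matrix.toBlocks_fromBlocks₂₁]
  rw [hblocks, hY', hY _ h₂₁, add_zero, map_zero]

theorem schattenNorm_sum_powerset_sq_le {ι : Type*} (hq : 2 ≤ q)
    (C : ι → Set (Matrix n n ℂ)) (T : Finset ι) (G : Finset ι → Matrix n n ℂ)
    (hmem : ∀ x ∈ T, ∀ S, x ∉ S → G S ∈ StarSubalgebra.centralizer ℂ (C x))
    (horth : ∀ x ∈ T, ∀ S, x ∈ S → ∀ Z ∈ StarSubalgebra.centralizer ℂ (C x),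
      (Z * G S).trace = 0) :
    schattenNorm q (∑ S ∈ T.powerset, G S) ^ 2 ≤
      ∑ S ∈ T.powerset, (q - 1) ^ S.card * schattenNorm q (G S) ^ 2 := by
  classical
  induction T using Finset.induction_on generalizing G with
  | empty => simp
  | insert x T hx ih =>
    have hx_mem (S) (hS : S ∈ T.powerset) : x ∉ S := fun h => hx (Finset.mem_powerset.1 hS h)
    have hne (y) (hy : y ∈ T) : y ≠ x := ne_of_mem_of_not_mem hy hx
    have ih_without := ih G (fun y hy => hmem y (Finset.mem_insert_of_mem hy))
      fun y hy => horth y (Finset.mem_insert_of_mem hy)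
    have ih_with := ih (fun S => G (insert x S))
      (fun y hy S hS => hmem y (Finset.mem_insert_of_mem hy) _ (by simp [hS, hne y hy]))
      fun y hy S hS => horth y (Finset.mem_insert_of_mem hy) _ (Finset.mem_insert_of_mem hS)
    have hstep := schattenNorm_add_sq_le_of_mem_centralizer hq (C := C x)
      (A := ∑ S ∈ T.powerset, G S) (Y := ∑ S ∈ T.powerset, G (insert x S))
      (sum_mem fun S hS => hmem x (Finset.mem_insert_self x T) S (hx_mem S hS))
      fun Z hZ => by
        rw [Finset.mul_sum, Matrix.trace_sum]
        exact Finset.sum_eq_zero fun S _ =>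
          horth x (Finset.mem_insert_self x T) _ (Finset.mem_insert_self x S) Z hZ
    rw [Finset.sum_powerset_insert hx, Finset.sum_powerset_insert hx]
    refine hstep.trans (add_le_add ih_without ?_)
    calc (q - 1) * schattenNorm q (∑ S ∈ T.powerset, G (insert x S)) ^ 2
        ≤ (q - 1) * ∑ S ∈ T.powerset, (q - 1) ^ S.card * schattenNorm q (G (insert x S)) ^ 2 :=
          mul_le_mul_of_nonneg_left ih_with (by linarith)
      _ = _ := by
          rw [Finset.mul_sum]
          refine Finset.sum_congr rfl fun S hS => ?_
          rw [Finset.card_insert_of_notMem (hx_mem S hS), pow_succ' (q - 1), mul_assoc]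

end Dilation

section Sites

section SiteUnit

variable {ι : Type*} [DecidableEq ι] {Q : ι → Type*}

lemma apply_eq_and_eq_update_comm (x : ι) (a b : Q x) (f : ∀ y, Q y) {g : ∀ y, Q y} :
    g x = b ∧ f = Function.update g x a ↔ f x = a ∧ g = Function.update f x b := by
  constructor <;> rintro ⟨rfl, rfl⟩ <;> simp

variable (R : Type*) [Fintype ι] [∀ x, DecidableEq (Q x)]

/-- The matrix unit `|a⟩⟨b|` at the site `x`, tensored with the identity at all other sites. -/
def siteUnit [Zero R] [One R] (x : ι) (a b : Q x) : Matrix (∀ y, Q y) (∀ y, Q y) R :=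
  Matrix.of fun f g => if g x = b ∧ f = Function.update g x a then 1 else 0

lemma conjTranspose_siteUnit [NonAssocSemiring R] [StarRing R] (x : ι) (a b : Q x) :
    (siteUnit R x a b)ᴴ = siteUnit R x b a := by
  ext f g
  simp [siteUnit, apply_eq_and_eq_update_comm x a b g, apply_ite star]

variable {R} [∀ x, Fintype (Q x)]

lemma mul_siteUnit_apply [NonAssocSemiring R] (x : ι) (a b : Q x)
    (A : Matrix (∀ y, Q y) (∀ y, Q y) R) (f g : ∀ y, Q y) :
    (A * siteUnit R x a b) f g = if g x = b then A f (Function.update g x a) else 0 := by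
  simp [Matrix.mul_apply, siteUnit, ite_and]

lemma siteUnit_mul_apply [NonAssocSemiring R] (x : ι) (a b : Q x)
    (A : Matrix (∀ y, Q y) (∀ y, Q y) R) (f g : ∀ y, Q y) :
    (siteUnit R x a b * A) f g = if f x = a then A (Function.update f x b) g else 0 := by
  simp only [Matrix.mul_apply, siteUnit, Matrix.of_apply, apply_eq_and_eq_update_comm x a b f]
  simp [ite_and]

lemma sum_siteUnit_mul_siteUnit [NonAssocSemiring R] (x : ι) (a : Q x) :
    ∑ v, siteUnit R x v a * siteUnit R x a v = (1 : Matrix (∀ y, Q y) (∀ y, Q y) R) := by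
  ext f g
  have hupdate : g x = f x ∧ Function.update f x a = Function.update g x a ↔ f = g := by
    refine ⟨fun ⟨hx, h⟩ => ?_, by rintro rfl; simp⟩
    rw [← Function.update_eq_self x f, ← Function.update_eq_self x g, hx,
      ← Function.update_idem a (f x) f, h, Function.update_idem]
  simp only [Matrix.sum_apply, siteUnit_mul_apply, Finset.sum_ite_eq, Finset.mem_univ, if_true]
  simp only [siteUnit, Matrix.of_apply, hupdate, Matrix.one_apply]

end SiteUnit

variable {m : ℕ} {Q : Fin m → Type*} [∀ x, Fintype (Q x)] [∀ x, DecidableEq (Q x)]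
  {A : Matrix (∀ x, Q x) (∀ x, Q x) ℂ} {x : Fin m}

lemma SupportedOn.exists_apply_eq {S : Finset (Fin m)} (hA : SupportedOn Q S A) :
    ∃ B : Matrix (∀ y : {y // y ∈ S}, Q y) (∀ y : {y // y ∈ S}, Q y) ℂ, ∀ f g,
      A f g = if ∀ y ∉ S, f y = g y then B (fun y => f y) (fun y => g y) else 0 := by
  obtain ⟨B, rfl⟩ := hA
  refine ⟨B, fun f g => ?_⟩
  simp [Matrix.one_apply, funext_iff]

lemma SupportedOn.commute_siteUnit {S : Finset (Fin m)} (hA : SupportedOn Q S A) (hx : x ∉ S)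
    (a b : Q x) : Commute A (siteUnit ℂ x a b) := by
  obtain ⟨B, hB⟩ := hA.exists_apply_eq
  have hupdate (f : ∀ y, Q y) (v : Q x) :
      (fun y : {y // y ∈ S} => Function.update f x v y) = fun y : {y // y ∈ S} => f y :=
    funext fun y => Function.update_of_ne (ne_of_mem_of_not_mem y.2 hx) v f
  have hswap (f g : ∀ y, Q y) : (g x = b ∧ ∀ y ∉ S, f y = Function.update g x a y) ↔
      f x = a ∧ ∀ y ∉ S, Function.update f x b y = g y := by
    simp only [Function.update]
    grind
  ext f g
  rw [mul_siteUnit_apply, siteUnit_mul_apply, hB, hB, hupdate, hupdate, ← ite_and, ← ite_and]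
  simp only [hswap]

/-- The algebra of operators acting only on the site `x`, given by its generators. -/
def siteUnits (Q : Fin m → Type*) [∀ x, DecidableEq (Q x)] (x : Fin m) :
    Set (Matrix (∀ y, Q y) (∀ y, Q y) ℂ) :=
  Set.range fun ab : Q x × Q x => siteUnit ℂ x ab.1 ab.2

lemma SupportedOn.mem_centralizer_siteUnits {S : Finset (Fin m)} (hA : SupportedOn Q S A)
    (hx : x ∉ S) : A ∈ StarSubalgebra.centralizer ℂ (siteUnits Q x) := by
  rw [StarSubalgebra.mem_centralizer_iff]
  rintro _ ⟨⟨a, b⟩, rfl⟩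
  rw [Matrix.star_eq_conjTranspose, conjTranspose_siteUnit]
  exact ⟨(hA.commute_siteUnit hx a b).eq.symm, (hA.commute_siteUnit hx b a).eq.symm⟩

lemma TracelessAt.sum_siteUnit_mul_mul_siteUnit (hA : TracelessAt Q x A) (a : Q x) :
    ∑ v, siteUnit ℂ x a v * A * siteUnit ℂ x v a = 0 := by
  ext f g
  simp only [Matrix.sum_apply, mul_siteUnit_apply, siteUnit_mul_apply, Matrix.zero_apply]
  split_ifs <;> simp [hA f g]

lemma TracelessAt.trace_mul_eq_zero {Z : Matrix (∀ x, Q x) (∀ x, Q x) ℂ} (hA : TracelessAt Q x A)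
    (hZ : Z ∈ StarSubalgebra.centralizer ℂ (siteUnits Q x)) : (Z * A).trace = 0 := by
  obtain h | ⟨⟨a⟩⟩ := isEmpty_or_nonempty (Q x)
  · have : IsEmpty (∀ y, Q y) := isEmpty_pi.2 ⟨x, h⟩
    exact Matrix.trace_eq_zero_of_isEmpty _
  have hcomm (v : Q x) : siteUnit ℂ x v a * Z = Z * siteUnit ℂ x v a :=
    ((StarSubalgebra.mem_centralizer_iff ℂ).1 hZ _ ⟨(v, a), rfl⟩).1
  calc (Z * A).trace = (Z * (∑ v, siteUnit ℂ x v a * siteUnit ℂ x a v) * A).trace := by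
        rw [sum_siteUnit_mul_siteUnit, mul_one]
    _ = ∑ v, (siteUnit ℂ x v a * (Z * (siteUnit ℂ x a v * A))).trace := by
        simp only [Finset.mul_sum, Finset.sum_mul, Matrix.trace_sum, ← mul_assoc, hcomm]
    _ = (Z * ∑ v, siteUnit ℂ x a v * A * siteUnit ℂ x v a).trace := by
        simp only [Matrix.trace_mul_comm (siteUnit ℂ x _ a), Finset.mul_sum, Matrix.trace_sum,
          mul_assoc]
    _ = 0 := by rw [hA.sum_siteUnit_mul_mul_siteUnit, mul_zero, Matrix.trace_zero]

end Sites

theorem schattenNorm_sum_sq_le {m : ℕ} {Q : Fin m → Type*} [∀ x, Fintype (Q x)]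
    [∀ x, DecidableEq (Q x)] {q : ℝ} (hq : 2 ≤ q) (𝒮 : Finset (Finset (Fin m)))
    (F : Finset (Fin m) → Matrix (∀ x, Q x) (∀ x, Q x) ℂ)
    (hsupp : ∀ S ∈ 𝒮, SupportedOn Q S (F S)) (htr : ∀ S ∈ 𝒮, ∀ x ∈ S, TracelessAt Q x (F S)) :
    schattenNorm q (∑ S ∈ 𝒮, F S) ^ 2 ≤
      ∑ S ∈ 𝒮, (q - 1) ^ S.card * schattenNorm q (F S) ^ 2 := by
  have hzero : schattenNorm q (0 : Matrix (∀ x, Q x) (∀ x, Q x) ℂ) = 0 := by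
    simpa using schattenNorm_smul (by linarith : 0 < q) 0 (0 : Matrix (∀ x, Q x) (∀ x, Q x) ℂ)
  have h := schattenNorm_sum_powerset_sq_le hq (siteUnits Q) Finset.univ
    (fun S => if S ∈ 𝒮 then F S else 0)
    (fun x _ S hx => by
      split_ifs with hS
      exacts [(hsupp S hS).mem_centralizer_siteUnits hx, zero_mem _])
    fun x _ S hx Z hZ => by
      split_ifs with hS
      exacts [(htr S hS x hx).trace_mul_eq_zero hZ, by rw [mul_zero, Matrix.trace_zero]]
  simpa [apply_ite (schattenNorm q), hzero] using h

/-- For a `k`-local Hamiltonian `H = ∑_{i₁<⋯<i_k} H_{i₁⋯i_k}` (sum over `k`-element subsets,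
each term supported on its subset and traceless on each of its qudits), and any `q ≥ 2`,
`‖H‖_q ≤ (q−1)^{k/2} · ‖I‖_q · ‖H‖_(2)` with `‖H‖_(2) = √(∑ ‖H_{i₁⋯i_k}‖_∞²)`. -/
theorem klocal_schatten_bound
    {m : ℕ} (Q : Fin m → Type*) [∀ x, Fintype (Q x)] [∀ x, DecidableEq (Q x)]
    (k : ℕ)
    (Hterm : Finset (Fin m) → Matrix (∀ x, Q x) (∀ x, Q x) ℂ)
    (hsupp : ∀ S ∈ Finset.univ.powersetCard k, SupportedOn Q S (Hterm S))
    (htr : ∀ S ∈ Finset.univ.powersetCard k, ∀ x ∈ S, TracelessAt Q x (Hterm S))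
    (H : Matrix (∀ x, Q x) (∀ x, Q x) ℂ)
    (hH : H = ∑ S ∈ Finset.univ.powersetCard k, Hterm S)
    (q : ℝ) (hq : 2 ≤ q) :
    schattenNorm q H ≤
      (q - 1) ^ ((k : ℝ) / 2) * schattenNorm q (1 : Matrix (∀ x, Q x) (∀ x, Q x) ℂ) *
        Real.sqrt (∑ S ∈ Finset.univ.powersetCard k, opNorm (Hterm S) ^ 2) := by
  set N₁ := schattenNorm q (1 : Matrix (∀ x, Q x) (∀ x, Q x) ℂ)
  have hN₁ : 0 ≤ N₁ := schattenNorm_nonneg q 1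
  have hq₁ : 0 ≤ q - 1 := by linarith
  have hpow : ((q - 1) ^ ((k : ℝ) / 2)) ^ 2 = (q - 1) ^ k := by
    rw [← Real.rpow_mul_natCast hq₁, ← Real.rpow_natCast]
    congr 1
    push_cast
    ring
  refine (pow_le_pow_iff_left₀ (schattenNorm_nonneg q H) (by positivity) two_ne_zero).1 ?_
  calc schattenNorm q H ^ 2
      ≤ ∑ S ∈ Finset.univ.powersetCard k, (q - 1) ^ S.card * schattenNorm q (Hterm S) ^ 2 :=
        hH ▸ schattenNorm_sum_sq_le hq _ Hterm hsupp htr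
    _ ≤ ∑ S ∈ Finset.univ.powersetCard k, (q - 1) ^ k * (N₁ * opNorm (Hterm S)) ^ 2 := by
        refine Finset.sum_le_sum fun S hS => ?_
        rw [(Finset.mem_powersetCard.1 hS).2]
        exact mul_le_mul_of_nonneg_left (pow_le_pow_left₀ (schattenNorm_nonneg q _)
          (schattenNorm_le_schattenNorm_one_mul_opNorm (by linarith) _) 2) (pow_nonneg hq₁ k)
    _ = _ := by
        rw [mul_pow, mul_pow, hpow, Real.sq_sqrt (by positivity), Finset.mul_sum]
        exact Finset.sum_congr rfl fun S _ => by ring
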